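/- Let κ be an uncountable cardinal, G a κ-free abelian group with Hom(G, ℤ) = 0, presented as F/K with F free on {e_α : α < λ}, λ = |G|, satisfying that the images π(F_β) (π : F → G the projection, F_β generated by {e_α : α < β}) are strictly increasing in β < λ. Let S be the equation system given by a free generating set {k_β : β < λ} of K. Then every subsystem T ⊆ S with |T| < κ has a nontrivial solution in ℤ: there is an assignment of nonzero integers to all variables appearing in T satisfying every equation of T. -/

import Mathlib

universe u

/-- Indices at which the filtration generated by `m` jumps inside `H`. -/
def sepJump {A I : Type*} [LinearOrder A] (m : A → (I →₀ ℤ)) (B : Set I) : Set A :=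
  {a | ∃ y ∈ Finsupp.supported ℤ ℤ B, y ∈ Submodule.span ℤ (m '' Set.Iic a) ∧
    y ∉ Submodule.span ℤ (m '' Set.Iio a)}

/-- A set of basis elements closed under the jump indices. -/
def sepClosed {A I : Type*} [LinearOrder A] (m : A → (I →₀ ℤ)) (B : Set I) : Prop :=
  ∀ a ∈ sepJump m B, ((m a).support : Set I) ⊆ B

/-- `φ` is nonzero on all members of the family supported in `B`. -/
def sepGood {A I : Type*} (m : A → (I →₀ ℤ)) (B : Set I) (φ : I → ℤ) : Prop :=
  ∀ a, ((m a).support : Set I) ⊆ B → Finsupp.linearCombination ℤ φ (m a) ≠ 0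

theorem sep_lc_congr {I : Type*} {φ ψ : I → ℤ} {v : I →₀ ℤ}
    (h : ∀ i ∈ v.support, φ i = ψ i) :
    Finsupp.linearCombination ℤ φ v = Finsupp.linearCombination ℤ ψ v := by
  rw [Finsupp.linearCombination_apply, Finsupp.linearCombination_apply]
  exact Finsupp.sum_congr fun i hi => by rw [h i hi]

theorem sepJump_mono {A I : Type*} [LinearOrder A] (m : A → (I →₀ ℤ)) {B C : Set I}
    (h : B ⊆ C) : sepJump m B ⊆ sepJump m C := by
  rintro a ⟨y, hy, h1, h2⟩
  exact ⟨y, Finsupp.supported_mono h hy, h1, h2⟩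

theorem sep_mem_jump {A I : Type*} [LinearOrder A] (m : A → (I →₀ ℤ))
    (hm : ∀ a, m a ∉ Submodule.span ℤ (m '' Set.Iio a)) {B : Set I} {a : A}
    (h : ((m a).support : Set I) ⊆ B) : a ∈ sepJump m B :=
  ⟨m a, h, Submodule.subset_span ⟨a, le_refl a, rfl⟩, hm a⟩

theorem sepJump_finite {A I : Type*} [LinearOrder A] [WellFoundedLT A] (m : A → (I →₀ ℤ))
    (B : Set I) (X : Finset I) : (sepJump m (B ∪ X) \ sepJump m B).Finite := by
  set N := Finsupp.supported ℤ ℤ B with hN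
  set H := Finsupp.supported ℤ ℤ (B ∪ (X : Set I)) with hH
  let P : Submodule ℤ ((I →₀ ℤ) ⧸ N) := H.map N.mkQ
  have hPfg : P.FG := by
    have : P = (Finsupp.supported ℤ ℤ (X : Set I)).map N.mkQ := by
      simp only [P, hH, Finsupp.supported_union, Submodule.map_sup]
      rw [← hN, Submodule.mkQ_map_self, bot_sup_eq]
    rw [this, Finsupp.supported_eq_span_single]
    apply Submodule.FG.map
    exact Submodule.fg_span (X.finite_toSet.image _)
  have : Module.Finite ℤ P := Module.Finite.iff_fg.mpr hPfg
  let f : A → Submodule ℤ P := fun a =>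
    ((H ⊓ Submodule.span ℤ (m '' Set.Iio a)).map N.mkQ).comap P.subtype
  have hf : ∀ a b : (sepJump m (B ∪ X) \ sepJump m B : Set A), a < b → f a < f b := by
    rintro ⟨a, ⟨y, hy, hy1, hy2⟩, hab⟩ ⟨b, hb⟩ hlt
    have hlt : a < b := hlt
    refine lt_of_le_not_ge ?_ ?_
    · apply Submodule.comap_mono
      apply Submodule.map_mono
      apply inf_le_inf_left
      exact Submodule.span_mono (Set.image_mono (Set.Iio_subset_Iio hlt.le))
    · intro hle
      have hyb : (⟨N.mkQ y, y, hy, rfl⟩ : P) ∈ f b := by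
        refine ⟨y, ⟨hy, ?_⟩, rfl⟩
        exact Submodule.span_mono (Set.image_mono (Set.Iic_subset_Iio.mpr hlt)) hy1
      obtain ⟨z, ⟨hz1, hz2⟩, hz⟩ := hle hyb
      have hz : N.mkQ z = N.mkQ y := hz
      have hyz : y - z ∈ N := by
        rw [← Submodule.ker_mkQ N, LinearMap.mem_ker, map_sub, hz, sub_self]
      apply hab
      refine ⟨y - z, hyz, Submodule.sub_mem _ hy1 (Submodule.span_mono
        (Set.image_mono Set.Iio_subset_Iic_self) hz2), fun h => hy2 ?_⟩
      have := Submodule.add_mem _ h hz2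
      simpa using this
  have : StrictMono (fun a : (sepJump m (B ∪ X) \ sepJump m B : Set A) => f a) :=
    fun a b h => hf a b h
  have : WellFoundedGT (sepJump m (B ∪ X) \ sepJump m B : Set A) := this.wellFoundedGT
  exact Set.finite_coe_iff.mp (Finite.of_wellFoundedLT_wellFoundedGT _)

theorem sep_glue {A I ι : Type*} [LinearOrder A] [Nonempty ι] (m : A → (I →₀ ℤ))
    (B : ι → Set I) (φ : ι → I → ℤ)
    (hd : ∀ i j, ∃ k, (B i ⊆ B k ∧ ∀ x ∈ B i, φ k x = φ i x) ∧
      (B j ⊆ B k ∧ ∀ x ∈ B j, φ k x = φ j x))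
    (hg : ∀ i, sepGood m (B i) (φ i)) :
    ∃ ψ : I → ℤ, (∀ i, ∀ x ∈ B i, ψ x = φ i x) ∧ sepGood m (⋃ i, B i) ψ := by
  classical
  have hdir : Directed (· ⊆ ·) B := fun i j => by
    obtain ⟨k, h1, h2⟩ := hd i j
    exact ⟨k, h1.1, h2.1⟩
  let ψ : I → ℤ := fun x => if h : ∃ i, x ∈ B i then φ h.choose x else 0
  have hψ : ∀ i, ∀ x ∈ B i, ψ x = φ i x := by
    intro i x hx
    have h : ∃ i, x ∈ B i := ⟨i, hx⟩
    have h0 : ψ x = φ h.choose x := dif_pos h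
    obtain ⟨k, h1, h2⟩ := hd i h.choose
    rw [h0, ← h1.2 x hx, ← h2.2 x h.choose_spec]
  refine ⟨ψ, hψ, ?_⟩
  intro a ha
  obtain ⟨i, hi⟩ := hdir.exists_mem_subset_of_finset_subset_biUnion ha
  rw [sep_lc_congr (ψ := φ i) (fun x hx => hψ i x (hi hx))]
  exact hg i a hi

theorem sep_closed_iUnion {A I ι : Type*} [LinearOrder A] [Nonempty ι] (m : A → (I →₀ ℤ))
    (B : ι → Set I) (hdir : Directed (· ⊆ ·) B)
    (hc : ∀ i, ∀ a ∈ sepJump m (B i), ((m a).support : Set I) ⊆ ⋃ i, B i) :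
    sepClosed m (⋃ i, B i) := by
  rintro a ⟨y, hy, h1, h2⟩
  obtain ⟨i, hi⟩ := hdir.exists_mem_subset_of_finset_subset_biUnion
    ((Finsupp.mem_supported _ _).mp hy)
  exact hc i a ⟨y, hi, h1, h2⟩

theorem sep_ext_one {A I : Type*} [LinearOrder A] [WellFoundedLT A] (m : A → (I →₀ ℤ))
    (hm : ∀ a, m a ∉ Submodule.span ℤ (m '' Set.Iio a)) (B : Set I) (hB : sepClosed m B)
    (X : Finset I) (φ : I → ℤ) (hφ : sepGood m (B ∪ X) φ) (x : I) :
    ∃ ψ : I → ℤ, (∀ i ∈ B ∪ (X : Set I), ψ i = φ i) ∧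
      sepGood m (insert x (B ∪ (X : Set I))) ψ := by
  classical
  by_cases hx : x ∈ B ∪ (X : Set I)
  · exact ⟨φ, fun _ _ => rfl, by rwa [Set.insert_eq_of_mem hx]⟩
  have hins : insert x (B ∪ (X : Set I)) = B ∪ ((insert x X : Finset I) : Set I) := by
    ext i; simp
  have hfin : {a | ((m a).support : Set I) ⊆ insert x (B ∪ (X : Set I)) ∧ m a x ≠ 0}.Finite := by
    refine (sepJump_finite m B (insert x X)).subset ?_
    rintro a ⟨h1, h2⟩
    rw [hins] at h1
    refine ⟨sep_mem_jump m hm h1, fun h => hx (Or.inl (hB a h ?_))⟩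
    simpa using h2
  have hbad : (⋃ a ∈ {a | ((m a).support : Set I) ⊆ insert x (B ∪ (X : Set I)) ∧ m a x ≠ 0},
      {c : ℤ | Finsupp.linearCombination ℤ (Function.update φ x c) (m a) = 0}).Finite := by
    refine hfin.biUnion ?_
    rintro a ⟨h1, h2⟩
    refine Set.Subsingleton.finite ?_
    intro c hc d hd
    have key : ∀ c, Finsupp.linearCombination ℤ (Function.update φ x c) (m a) =
        m a x * c + Finsupp.linearCombination ℤ φ ((m a).erase x) := by
      intro c
      conv_lhs => rw [← Finsupp.single_add_erase x (m a)]
      rw [map_add, Finsupp.linearCombination_single, Function.update_self, smul_eq_mul]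
      congr 1
      apply sep_lc_congr
      intro i hi
      rw [Function.update_of_ne]
      rintro rfl
      simp at hi
    simp only [Set.mem_ofPred_eq, key] at hc hd
    exact mul_left_cancel₀ h2 (by linarith)
  obtain ⟨c, hc⟩ := hbad.infinite_compl.nonempty
  have hag : ∀ i ∈ B ∪ (X : Set I), Function.update φ x c i = φ i := by
    intro i hi
    rw [Function.update_of_ne]
    rintro rfl
    exact hx hi
  refine ⟨Function.update φ x c, hag, ?_⟩
  intro a ha
  by_cases h0 : m a x = 0
  · have h1 : ((m a).support : Set I) ⊆ B ∪ X := by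
      intro i hi
      rcases ha hi with rfl | h
      · simp [h0] at hi
      · exact h
    rw [sep_lc_congr (ψ := φ) (fun i hi => hag i (h1 hi))]
    exact hφ a h1
  · intro h
    apply hc
    simp only [Set.mem_iUnion]
    exact ⟨a, ⟨ha, h0⟩, h⟩

theorem sep_ext_fin {A I : Type*} [LinearOrder A] [WellFoundedLT A] [DecidableEq I]
    (m : A → (I →₀ ℤ))
    (hm : ∀ a, m a ∉ Submodule.span ℤ (m '' Set.Iio a)) (B : Set I) (hB : sepClosed m B)
    (X : Finset I) (φ : I → ℤ) (hφ : sepGood m (B ∪ X) φ) (Y : Finset I) :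
    ∃ ψ : I → ℤ, (∀ i ∈ B ∪ (X : Set I), ψ i = φ i) ∧
      sepGood m (B ∪ ((X ∪ Y : Finset I) : Set I)) ψ := by
  induction Y using Finset.induction_on with
  | empty => exact ⟨φ, fun _ _ => rfl, by simpa using hφ⟩
  | insert x Y _ ih =>
    obtain ⟨ψ, h1, h2⟩ := ih
    obtain ⟨χ, h3, h4⟩ := sep_ext_one m hm B hB (X ∪ Y) ψ h2 x
    refine ⟨χ, fun i hi => ?_, ?_⟩
    · rw [h3 i, h1 i hi]
      rcases hi with hi | hi
      · exact Or.inl hi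
      · right; simp at hi ⊢; exact Or.inl hi
    · convert h4 using 1
      ext i; simp

theorem sep_step {A I : Type*} [LinearOrder A] [WellFoundedLT A] (m : A → (I →₀ ℤ))
    (hm : ∀ a, m a ∉ Submodule.span ℤ (m '' Set.Iio a)) (B : Set I) (hB : sepClosed m B)
    (φ : I → ℤ) (hφ : sepGood m B φ) (x : I) :
    ∃ (C : Set I) (ψ : I → ℤ), sepClosed m C ∧ sepGood m C ψ ∧ B ⊆ C ∧ x ∈ C ∧
      ∀ i ∈ B, ψ i = φ i := by
  classical
  let Q := {p : Finset I × (I → ℤ) // sepGood m (B ∪ p.1) p.2}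
  have step : ∀ p : Q, ∃ q : Q, p.1.1 ⊆ q.1.1 ∧
      (∀ i ∈ B ∪ (p.1.1 : Set I), q.1.2 i = p.1.2 i) ∧
      ∀ a ∈ sepJump m (B ∪ p.1.1) \ sepJump m B, (m a).support ⊆ q.1.1 := by
    rintro ⟨⟨X, φ⟩, h⟩
    obtain ⟨ψ, h1, h2⟩ := sep_ext_fin m hm B hB X φ h
      ((sepJump_finite m B X).toFinset.biUnion fun a => (m a).support)
    refine ⟨⟨⟨_, ψ⟩, h2⟩, Finset.subset_union_left, h1, ?_⟩
    intro a ha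
    refine subset_trans ?_ Finset.subset_union_right
    exact Finset.subset_biUnion_of_mem (fun a => (m a).support)
      ((sepJump_finite m B X).mem_toFinset.mpr ha)
  choose F hF1 hF2 hF3 using step
  obtain ⟨φ₀, h1, h2⟩ := sep_ext_fin m hm B hB ∅ φ (by simpa using hφ) {x}
  let p₀ : Q := ⟨⟨_, φ₀⟩, h2⟩
  let s : ℕ → Q := fun n => F^[n] p₀
  have hs : ∀ n, s (n + 1) = F (s n) := fun n => Function.iterate_succ_apply' F n p₀
  have hmono : ∀ n k, (s n).1.1 ⊆ (s (n + k)).1.1 ∧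
      ∀ i ∈ B ∪ ((s n).1.1 : Set I), (s (n + k)).1.2 i = (s n).1.2 i := by
    intro n k
    induction k with
    | zero => exact ⟨subset_rfl, fun _ _ => rfl⟩
    | succ k ih =>
      rw [← add_assoc, hs]
      refine ⟨ih.1.trans (hF1 _), fun i hi => ?_⟩
      rw [hF2 _ i, ih.2 i hi]
      exact Set.union_subset_union_right B (Finset.coe_subset.mpr ih.1) hi
  have hle : ∀ n k, n ≤ k → (B ∪ ((s n).1.1 : Set I) ⊆ B ∪ ((s k).1.1 : Set I) ∧
      ∀ i ∈ B ∪ ((s n).1.1 : Set I), (s k).1.2 i = (s n).1.2 i) := by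
    intro n k h
    obtain ⟨d, rfl⟩ := Nat.exists_eq_add_of_le h
    exact ⟨Set.union_subset_union_right B (Finset.coe_subset.mpr (hmono n d).1), (hmono n d).2⟩
  have hdd := fun i j => (⟨max i j, hle _ _ (le_max_left _ _), hle _ _ (le_max_right _ _)⟩ :
    ∃ k, (B ∪ ((s i).1.1 : Set I) ⊆ B ∪ ((s k).1.1 : Set I) ∧
      ∀ x ∈ B ∪ ((s i).1.1 : Set I), (s k).1.2 x = (s i).1.2 x) ∧
      (B ∪ ((s j).1.1 : Set I) ⊆ B ∪ ((s k).1.1 : Set I) ∧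
      ∀ x ∈ B ∪ ((s j).1.1 : Set I), (s k).1.2 x = (s j).1.2 x))
  obtain ⟨ψ, hψ1, hψ2⟩ := sep_glue m (fun n => B ∪ ((s n).1.1 : Set I)) (fun n => (s n).1.2)
    hdd (fun n => (s n).2)
  have hB0 : B ⊆ ⋃ n, B ∪ ((s n).1.1 : Set I) := fun i hi => Set.mem_iUnion.mpr ⟨0, Or.inl hi⟩
  refine ⟨_, ψ, ?_, hψ2, hB0, Set.mem_iUnion.mpr ⟨0, Or.inr ?_⟩, ?_⟩
  · apply sep_closed_iUnion
    · intro i j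
      obtain ⟨k, h1, h2⟩ := hdd i j
      exact ⟨k, h1.1, h2.1⟩
    · intro n a ha
      by_cases hab : a ∈ sepJump m B
      · exact (hB a hab).trans hB0
      · refine subset_trans ?_ (Set.subset_iUnion _ (n + 1))
        intro i hi
        right
        rw [hs]
        exact hF3 (s n) a ⟨ha, hab⟩ hi
  · simp [s, p₀]
  · intro i hi
    rw [hψ1 0 i (Or.inl hi)]
    exact h1 i (Or.inl hi)

theorem sep_main {A I : Type*} [LinearOrder A] [WellFoundedLT A] (m : A → (I →₀ ℤ))
    (hm : ∀ a, m a ∉ Submodule.span ℤ (m '' Set.Iio a)) :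
    ∃ φ : I → ℤ, ∀ a, Finsupp.linearCombination ℤ φ (m a) ≠ 0 := by
  classical
  let Q := {p : Set I × (I → ℤ) // sepClosed m p.1 ∧ sepGood m p.1 p.2}
  let r : Q → Q → Prop := fun p q => p.1.1 ⊆ q.1.1 ∧ ∀ i ∈ p.1.1, q.1.2 i = p.1.2 i
  have hrefl : ∀ p, r p p := fun p => ⟨subset_rfl, fun _ _ => rfl⟩
  have hbot : ∀ a, a ∉ sepJump m (∅ : Set I) := by
    rintro a ⟨y, hy, h1, h2⟩
    rw [Finsupp.supported_empty, Submodule.mem_bot] at hy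
    exact h2 (hy ▸ Submodule.zero_mem _)
  have q₀ : Q := ⟨⟨∅, 0⟩, fun a ha => (hbot a ha).elim,
    fun a ha => (hbot a (sep_mem_jump m hm ha)).elim⟩
  have : Nonempty Q := ⟨q₀⟩
  obtain ⟨p, hp⟩ := exists_maximal_of_nonempty_chains_bounded (r := r) (by
    intro c hc hne
    have : Nonempty c := hne.to_subtype
    have hdd : ∀ i j : c, ∃ k : c, r i.1 k.1 ∧ r j.1 k.1 := by
      intro i j
      by_cases hij : i = j
      · exact ⟨i, hrefl _, hij ▸ hrefl _⟩
      rcases hc i.2 j.2 (fun h => hij (Subtype.ext h)) with h | h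
      · exact ⟨j, h, hrefl _⟩
      · exact ⟨i, hrefl _, h⟩
    obtain ⟨ψ, h1, h2⟩ := sep_glue m (fun i : c => i.1.1.1) (fun i : c => i.1.1.2) hdd
      (fun i => i.1.2.2)
    have hcl : sepClosed m (⋃ i : c, i.1.1.1) := by
      apply sep_closed_iUnion
      · intro i j
        obtain ⟨k, h1, h2⟩ := hdd i j
        exact ⟨k, h1.1, h2.1⟩
      · intro i a ha
        exact (i.1.2.1 a ha).trans (Set.subset_iUnion (fun i : c => i.1.1.1) i)
    refine ⟨⟨⟨_, ψ⟩, hcl, h2⟩, fun q hq => ⟨?_, h1 ⟨q, hq⟩⟩⟩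
    exact Set.subset_iUnion (fun i : c => i.1.1.1) ⟨q, hq⟩)
    (fun {a b c} h1 h2 => ⟨h1.1.trans h2.1, fun i hi => by rw [h2.2 i (h1.1 hi), h1.2 i hi]⟩)
  refine ⟨p.1.2, fun a => p.2.2 a fun x _ => ?_⟩
  obtain ⟨C, ψ, h1, h2, h3, h4, h5⟩ := sep_step m hm p.1.1 p.2.1 p.1.2 p.2.2 x
  exact (hp ⟨⟨C, ψ⟩, h1, h2⟩ ⟨h3, h5⟩).1 h4

/-- Proposition 2.5: let `κ` be uncountable, `G` a `κ`-free abelian group with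
trivial dual, presented as `F/K` where `F` is free on the well-ordered set `Λ` of
cardinality `|G|` via the surjection `π`, satisfying that the images `π(F_β)` are
strictly increasing (condition `(*)`), and let the equations be indexed by a free
generating set `k` of `K = ker π`. Then every subsystem `T` of cardinality `< κ`
has a nontrivial solution in `ℤ`: an assignment of nonzero integers to all
variables appearing in `T` satisfying every equation of `T`. -/
theorem stmt13 {κ : Cardinal.{u}} (hκ : Cardinal.aleph0 < κ)
    {G : Type u} [AddCommGroup G]
    (hfree : ∀ s : Set G, Cardinal.mk s < κ → Module.Free ℤ (Submodule.span ℤ s))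
    (hdual : ∀ φ : G →+ ℤ, φ = 0)
    {Λ : Type u} [LinearOrder Λ] [WellFoundedLT Λ]
    (hcard : Cardinal.mk Λ = Cardinal.mk G)
    (π : (Λ →₀ ℤ) →ₗ[ℤ] G) (hπ : Function.Surjective π)
    (hstar : ∀ β : Λ, π (Finsupp.single β 1) ∉
      Submodule.span ℤ ((fun α => π (Finsupp.single α 1)) '' Set.Iio β))
    {J : Type u} (k : J → (Λ →₀ ℤ)) (hki : LinearIndependent ℤ k)
    (hk : Submodule.span ℤ (Set.range k) = LinearMap.ker π)
    (T : Set J) (hT : Cardinal.mk T < κ) :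
    ∃ f : Λ → ℤ, (∀ α, (∃ j ∈ T, k j α ≠ 0) → f α ≠ 0) ∧
      ∀ j ∈ T, ((k j).sum fun α a => a * f α) = 0 := by
  classical
  let A : Set Λ := {α | ∃ j ∈ T, k j α ≠ 0}
  have hA : Cardinal.mk A < κ := by
    have hAe : A = ⋃ j : T, ((k j).support : Set Λ) := by
      ext α; simp [A]
    rw [hAe]
    refine lt_of_le_of_lt (Cardinal.mk_iUnion_le_sum_mk.trans
      (Cardinal.sum_le_sum _ (fun _ => Cardinal.aleph0) fun j => ?_)) ?_
    · exact (Cardinal.mk_lt_aleph0).le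
    · rw [Cardinal.sum_const']
      refine (Cardinal.mul_le_max _ _).trans_lt ?_
      exact max_lt (max_lt hT hκ) hκ
  let e : Λ → G := fun α => π (Finsupp.single α 1)
  let M : Submodule ℤ G := Submodule.span ℤ (e '' A)
  have hM : Module.Free ℤ M := hfree _ (Cardinal.mk_image_le.trans_lt hA)
  let b := Module.Free.chooseBasis ℤ M
  let g : A → M := fun α => ⟨e α, Submodule.subset_span ⟨α, α.2, rfl⟩⟩
  let m : A → (Module.Free.ChooseBasisIndex ℤ M →₀ ℤ) := fun α => b.repr (g α)
  have hm : ∀ a, m a ∉ Submodule.span ℤ (m '' Set.Iio a) := by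
    intro a ha
    have h1 : M.subtype (b.repr.symm (m a)) ∈
        (Submodule.span ℤ (m '' Set.Iio a)).map
          (M.subtype.comp b.repr.symm.toLinearMap) := ⟨_, ha, rfl⟩
    rw [Submodule.map_span] at h1
    apply hstar a
    have h2 : M.subtype (b.repr.symm (m a)) = π (Finsupp.single a.1 1) := by simp [m, g, e]
    rw [h2] at h1
    refine Submodule.span_mono ?_ h1
    rintro _ ⟨_, ⟨c, hc, rfl⟩, rfl⟩
    exact ⟨c.1, hc, by simp [m, g, e]⟩
  obtain ⟨φ, hφ⟩ := sep_main m hm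
  let Φ : M →ₗ[ℤ] ℤ := (Finsupp.linearCombination ℤ φ).comp b.repr.toLinearMap
  have hΦ : ∀ a, Φ (g a) ≠ 0 := hφ
  refine ⟨fun α => if h : α ∈ A then Φ (g ⟨α, h⟩) else 0, ?_, ?_⟩
  · intro α hα
    have h : α ∈ A := hα
    simp only [dif_pos h]
    exact hΦ _
  · intro j hj
    have hsup : ∀ α ∈ (k j).support, α ∈ A := fun α hα => ⟨j, hj, by simpa using hα⟩
    let G' : Λ → M := fun α => if h : α ∈ A then g ⟨α, h⟩ else 0
    have h0 : (k j).sum (fun α a => a • G' α) = 0 := by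
      apply Subtype.ext
      have hker : π (k j) = 0 := by
        rw [← LinearMap.mem_ker, ← hk]
        exact Submodule.subset_span ⟨j, rfl⟩
      rw [← Finsupp.sum_single (k j), map_finsuppSum] at hker
      rw [ZeroMemClass.coe_zero, ← hker, Finsupp.sum, Finsupp.sum, AddSubmonoidClass.coe_finsetSum]
      refine Finset.sum_congr rfl fun α hα => ?_
      simp only [G', dif_pos (hsup α hα), g, e]
      rw [SetLike.val_smul, ← map_smul, Finsupp.smul_single, smul_eq_mul, mul_one]
    have h1 := congrArg Φ h0
    rw [map_finsuppSum, map_zero] at h1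
    refine Eq.trans ?_ h1
    refine Finsupp.sum_congr fun α hα => ?_
    simp only [G', dif_pos (hsup α hα), map_smul, smul_eq_mul]
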